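/- G has a subgroup of index 9 whose abelianization is isomorphic to ℤ × (ℤ/3ℤ) × (ℤ/4ℤ) × (ℤ/5ℤ)³ × (ℤ/7ℤ). (These index-9 subgroups correspond to the degree-9 covers of the Weber–Seifert dodecahedral space in which the canonical surface splits into two components, one of which is embedded.) -/

import Mathlib

/-!
The group `G` acts on nine points through a homomorphism onto `PSL(2, 8)`, acting on the
projective line over the field with eight elements; the permutations of the six generators are
recorded in `sig`. The subgroup `K` is the stabilizer of the point `0`, which has index 9 because
the action is transitive.

The abelianization of `K` is computed as in the Reidemeister–Schreier method. For a transversal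
`rep` of the cosets, the Schreier elements `(rep (g • i))⁻¹ * g * rep i` of `K` have classes
`sch g i` in the abelianization, and these satisfy the cocycle identity
`sch (g * h) i = sch g (h • i) + sch h i`. So each relator of `G` and each point give one linear
relation among the 54 classes of generators, and the Schreier tree makes eight of those classes
vanish. The integral linear algebra in `solve_relations` shows that all classes are the
combinations, listed in `tab`, of the four classes `sch v 8`, `sch v 2`, `sch y 7`, `sch z 2`, of
which the last three are killed by `5`, `5` and `420`. This bounds the abelianization from above.

For the bound from below, the same table reduced modulo `5`, `5` and `420` defines a
homomorphism `Φ` from `G` to the wreath product of `M = ℤ × ℤ/3 × ℤ/4 × (ℤ/5)³ × ℤ/7` with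
`Perm (Fin 9)`: that the relators of `G` are respected is a finite computation (`genW_rel`).
The `M`-coordinate at the base point restricts to a homomorphism from `K` to `M`, inducing `phi`
on the abelianization. It sends the four distinguished classes to generators of `M` of the same
orders, hence it is an isomorphism.
-/

/-- Generators of the fundamental group of the Weber–Seifert dodecahedral space. -/
inductive Gen : Type
  | u | v | w | x | y | z
  deriving DecidableEq

open FreeGroup in
/-- The six relators of the Weber–Seifert presentation. -/
def wsRels : Set (FreeGroup Gen) :=
  { of .u * of .x * (of .y)⁻¹ * (of .v)⁻¹ * of .w,
    of .u * of .y * (of .z)⁻¹ * (of .w)⁻¹ * of .x,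
    of .u * of .z * (of .v)⁻¹ * (of .x)⁻¹ * of .y,
    of .u * of .v * (of .w)⁻¹ * (of .y)⁻¹ * of .z,
    of .u * of .w * (of .x)⁻¹ * (of .z)⁻¹ * of .v,
    of .v * of .x * of .z * of .w * of .y }

/-- The fundamental group of the Weber–Seifert hyperbolic dodecahedral space. -/
abbrev G : Type := PresentedGroup wsRels

def u : G := PresentedGroup.of Gen.u
def v : G := PresentedGroup.of Gen.v
def w : G := PresentedGroup.of Gen.w
def x : G := PresentedGroup.of Gen.x
def y : G := PresentedGroup.of Gen.y
def z : G := PresentedGroup.of Gen.z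

/-! ### The action on nine points and the table of homology classes -/

/-- The permutation of the nine points by which each generator acts (from the left), given
together with its inverse. -/
def sig : Gen → Equiv.Perm (Fin 9)
  | .u => ⟨![8, 7, 3, 0, 1, 4, 5, 2, 6], ![3, 4, 7, 2, 5, 6, 8, 1, 0], by decide, by decide⟩
  | .v => ⟨![4, 0, 6, 5, 3, 2, 7, 8, 1], ![1, 8, 5, 4, 0, 3, 2, 6, 7], by decide, by decide⟩
  | .w => ⟨![2, 6, 8, 0, 1, 7, 3, 4, 5], ![3, 4, 0, 6, 7, 8, 1, 5, 2], by decide, by decide⟩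
  | .x => ⟨![6, 7, 0, 2, 3, 4, 8, 5, 1], ![2, 8, 3, 4, 5, 7, 0, 1, 6], by decide, by decide⟩
  | .y => ⟨![6, 7, 3, 1, 5, 2, 4, 8, 0], ![8, 3, 5, 2, 6, 4, 0, 1, 7], by decide, by decide⟩
  | .z => ⟨![7, 3, 1, 8, 6, 0, 5, 2, 4], ![5, 2, 7, 1, 8, 6, 4, 0, 3], by decide, by decide⟩

/-- The class of the Schreier element of a generator at a point, in coordinates with respect to the
four generating classes `sch v 8`, `sch v 2`, `sch y 7`, `sch z 2`. The last three of these have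
orders `5`, `5` and `420`, so only the residues of the corresponding coordinates matter. -/
def tab : Gen → Fin 9 → ℤ × ℤ × ℤ × ℤ
  | .u => ![(0, -2, -2, 60), (0, -1, 2, -139), (0, 2, 1, 128), (0, 0, 0, 0), (1, -2, -2, -185),
      (0, -1, 2, 111), (0, 2, -1, 17), (-1, 0, -2, 14), (0, -1, -2, 78)]
  | .v => ![(0, 0, 0, 0), (0, 0, 0, 0), (0, 1, 0, 0), (0, 1, -2, 29), (0, 1, 2, -133),
      (0, -2, -2, 60), (0, -2, -2, -95), (-1, 2, 0, -29), (1, 0, 0, 0)]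
  | .w => ![(1, -2, 0, 169), (0, -1, 1, 125), (0, -2, -1, 17), (-1, 2, 2, -127), (0, 0, 0, -52),
      (0, 2, 1, -172), (0, -1, -2, -13), (0, -2, 1, 126), (0, 2, 1, 95)]
  | .x => ![(0, 0, 0, 0), (0, 0, 0, -141), (0, 0, 0, 0), (0, 0, 0, -68), (-1, -1, -1, 140),
      (0, 0, 0, 169), (0, -2, -2, -138), (1, 1, -1, -59), (0, -2, 2, 13)]
  | .y => ![(0, 1, 2, -60), (0, 1, 2, -81), (0, -1, 1, 126), (-1, -1, -2, -67), (0, -1, 1, -171),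
      (1, 1, -1, 109), (0, 0, 2, 60), (0, 0, 1, 0), (0, 0, 0, 0)]
  | .z => ![(0, 0, 0, 0), (0, -1, -2, 60), (0, 0, 0, 1), (0, 2, -2, 60), (-1, -2, -1, 93),
      (0, 0, 0, 0), (1, 1, -1, -94), (0, -1, -2, -77), (0, 1, 0, 125)]

/-! ### Solving the Reidemeister–Schreier relations -/

set_option maxHeartbeats 4000000 in
/-- In an additive abelian group, let `a g i` be unknowns for the generators `g` and the points `i`
that vanish on the edges of a spanning tree and satisfy the relations obtained by tracing each
relator from each point. Then they are all determined by four of them, with coefficients `tab`,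
and three of these four are torsion. -/
theorem solve_relations {B : Type*} [AddCommGroup B] (a : Gen → Fin 9 → B)
    (tu3 : a .u 3 = 0)
    (tv0 : a .v 0 = 0)
    (tv1 : a .v 1 = 0)
    (tx0 : a .x 0 = 0)
    (tx2 : a .x 2 = 0)
    (ty8 : a .y 8 = 0)
    (tz0 : a .z 0 = 0)
    (tz5 : a .z 5 = 0)
    (h1 : ∀ i, a .u (sig .x ((sig .y)⁻¹ ((sig .v)⁻¹ (sig .w i)))) + a .x ((sig .y)⁻¹ ((sig .v)⁻¹ (sig .w i))) - a .y ((sig .y)⁻¹ ((sig .v)⁻¹ (sig .w i))) - a .v ((sig .v)⁻¹ (sig .w i)) + a .w i = 0)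
    (h2 : ∀ i, a .u (sig .y ((sig .z)⁻¹ ((sig .w)⁻¹ (sig .x i)))) + a .y ((sig .z)⁻¹ ((sig .w)⁻¹ (sig .x i))) - a .z ((sig .z)⁻¹ ((sig .w)⁻¹ (sig .x i))) - a .w ((sig .w)⁻¹ (sig .x i)) + a .x i = 0)
    (h3 : ∀ i, a .u (sig .z ((sig .v)⁻¹ ((sig .x)⁻¹ (sig .y i)))) + a .z ((sig .v)⁻¹ ((sig .x)⁻¹ (sig .y i))) - a .v ((sig .v)⁻¹ ((sig .x)⁻¹ (sig .y i))) - a .x ((sig .x)⁻¹ (sig .y i)) + a .y i = 0)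
    (h4 : ∀ i, a .u (sig .v ((sig .w)⁻¹ ((sig .y)⁻¹ (sig .z i)))) + a .v ((sig .w)⁻¹ ((sig .y)⁻¹ (sig .z i))) - a .w ((sig .w)⁻¹ ((sig .y)⁻¹ (sig .z i))) - a .y ((sig .y)⁻¹ (sig .z i)) + a .z i = 0)
    (h5 : ∀ i, a .u (sig .w ((sig .x)⁻¹ ((sig .z)⁻¹ (sig .v i)))) + a .w ((sig .x)⁻¹ ((sig .z)⁻¹ (sig .v i))) - a .x ((sig .x)⁻¹ ((sig .z)⁻¹ (sig .v i))) - a .z ((sig .z)⁻¹ (sig .v i)) + a .v i = 0)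
    (h6 : ∀ i, a .v (sig .x (sig .z (sig .w (sig .y i)))) + a .x (sig .z (sig .w (sig .y i))) + a .z (sig .w (sig .y i)) + a .w (sig .y i) + a .y i = 0) :
    (5:ℤ) • a .v 2 = 0 ∧ (5:ℤ) • a .y 7 = 0 ∧ (420:ℤ) • a .z 2 = 0 ∧
    ∀ g i, a g i = (tab g i).1 • a .v 8 + (tab g i).2.1 • a .v 2 +
      (tab g i).2.2.1 • a .y 7 + (tab g i).2.2.2 • a .z 2 := by
  -- Each fact `p..` solves one relation for one unknown, so that finally all unknowns are expressed
  -- through the nine classes `v5, z1, y2, w8, u7, y1, y4, u5, w4`.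
  have r2_2 : a .u 7 + a .y 1 - a .z 1 - a .w 3 + a .x 2 = 0 := h2 2
  have pw3 : a .w 3 = -a .z 1 + a .u 7 + a .y 1 := by
    linear_combination (norm := module) -r2_2 + tx2
  have r3_0 : a .u 3 + a .z 1 - a .v 1 - a .x 0 + a .y 0 = 0 := h3 0
  have py0 : a .y 0 = -a .z 1 := by
    linear_combination (norm := module) r3_0 - tu3 + tv1 + tx0
  have r3_2 : a .u 7 + a .z 0 - a .v 0 - a .x 4 + a .y 2 = 0 := h3 2
  have px4 : a .x 4 = a .y 2 + a .u 7 := by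
    linear_combination (norm := module) -r3_2 + tz0 - tv0
  have r3_8 : a .u 0 + a .z 5 - a .v 5 - a .x 2 + a .y 8 = 0 := h3 8
  have pu0 : a .u 0 = a .v 5 := by
    linear_combination (norm := module) r3_8 - tz5 + tx2 - ty8
  have r4_0 : a .u 3 + a .v 4 - a .w 4 - a .y 1 + a .z 0 = 0 := h4 0
  have pv4 : a .v 4 = a .y 1 + a .w 4 := by
    linear_combination (norm := module) r4_0 - tu3 - tz0
  have r5_4 : a .u 5 + a .w 8 - a .x 8 - a .z 1 + a .v 4 = 0 := h5 4
  have px8 : a .x 8 = -a .z 1 + a .w 8 + a .y 1 + a .u 5 + a .w 4 := by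
    linear_combination (norm := module) -r5_4 + pv4
  have r6_2 : a .v 5 + a .x 7 + a .z 0 + a .w 3 + a .y 2 = 0 := h6 2
  have px7 : a .x 7 = -a .v 5 + a .z 1 - a .y 2 - a .u 7 - a .y 1 := by
    linear_combination (norm := module) r6_2 - tz0 - pw3
  have r1_0 : a .u 3 + a .x 4 - a .y 4 - a .v 5 + a .w 0 = 0 := h1 0
  have pw0 : a .w 0 = a .v 5 - a .y 2 - a .u 7 + a .y 4 := by
    linear_combination (norm := module) r1_0 - tu3 - px4
  have r1_8 : a .u 0 + a .x 2 - a .y 2 - a .v 3 + a .w 8 = 0 := h1 8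
  have pv3 : a .v 3 = a .v 5 - a .y 2 + a .w 8 := by
    linear_combination (norm := module) -r1_8 + pu0 + tx2
  have r2_8 : a .u 0 + a .y 8 - a .z 8 - a .w 4 + a .x 8 = 0 := h2 8
  have pz8 : a .z 8 = a .v 5 - a .z 1 + a .w 8 + a .y 1 + a .u 5 := by
    linear_combination (norm := module) -r2_8 + pu0 + ty8 + px8
  have r4_1 : a .u 4 + a .v 0 - a .w 0 - a .y 2 + a .z 1 = 0 := h4 1
  have pu4 : a .u 4 = a .v 5 - a .z 1 - a .u 7 + a .y 4 := by
    linear_combination (norm := module) r4_1 - tv0 + pw0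
  have r4_4 : a .u 5 + a .v 3 - a .w 3 - a .y 0 + a .z 4 = 0 := h4 4
  have pz4 : a .z 4 = -a .v 5 - (2:ℤ) • a .z 1 + a .y 2 - a .w 8 + a .u 7 + a .y 1 - a .u 5 := by
    linear_combination (norm := module) r4_4 - pv3 + pw3 + py0
  have r5_1 : a .u 4 + a .w 7 - a .x 7 - a .z 5 + a .v 1 = 0 := h5 1
  have pw7 : a .w 7 = -(2:ℤ) • a .v 5 + (2:ℤ) • a .z 1 - a .y 2 - a .y 1 - a .y 4 := by
    linear_combination (norm := module) r5_1 - pu4 + px7 + tz5 - tv1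
  have r1_7 : a .u 1 + a .x 8 - a .y 8 - a .v 0 + a .w 7 = 0 := h1 7
  have pu1 : a .u 1 = (2:ℤ) • a .v 5 - a .z 1 + a .y 2 - a .w 8 + a .y 4 - a .u 5 - a .w 4 := by
    linear_combination (norm := module) r1_7 - px8 + ty8 + tv0 - pw7
  have r2_4 : a .u 5 + a .y 4 - a .z 4 - a .w 6 + a .x 4 = 0 := h2 4
  have pw6 : a .w 6 = a .v 5 + (2:ℤ) • a .z 1 + a .w 8 - a .y 1 + a .y 4 + (2:ℤ) • a .u 5 := by
    linear_combination (norm := module) -r2_4 - pz4 + px4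
  have r5_0 : a .u 3 + a .w 6 - a .x 6 - a .z 8 + a .v 0 = 0 := h5 0
  have px6 : a .x 6 = (3:ℤ) • a .z 1 - (2:ℤ) • a .y 1 + a .y 4 + a .u 5 := by
    linear_combination (norm := module) -r5_0 + tu3 + pw6 - pz8 + tv0
  have r6_0 : a .v 1 + a .x 8 + a .z 3 + a .w 6 + a .y 0 = 0 := h6 0
  have pz3 : a .z 3 = -a .v 5 - (2:ℤ) • a .w 8 - a .y 4 - (3:ℤ) • a .u 5 - a .w 4 := by
    linear_combination (norm := module) r6_0 - tv1 - px8 - pw6 - py0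
  have r6_1 : a .v 8 + a .x 6 + a .z 4 + a .w 7 + a .y 1 = 0 := h6 1
  have pv8 : a .v 8 = (3:ℤ) • a .v 5 - (3:ℤ) • a .z 1 + a .w 8 - a .u 7 + a .y 1 := by
    linear_combination (norm := module) r6_1 - px6 - pz4 - pw7
  have r1_4 : a .u 5 + a .x 7 - a .y 7 - a .v 8 + a .w 4 = 0 := h1 4
  have py7 : a .y 7 = -(4:ℤ) • a .v 5 + (4:ℤ) • a .z 1 - a .y 2 - a .w 8 - (2:ℤ) • a .y 1 + a .u 5 + a .w 4 := by
    linear_combination (norm := module) -r1_4 + px7 - pv8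
  have r2_7 : a .u 1 + a .y 3 - a .z 3 - a .w 8 + a .x 7 = 0 := h2 7
  have py3 : a .y 3 = -(2:ℤ) • a .v 5 + a .u 7 + a .y 1 - (2:ℤ) • a .y 4 - (2:ℤ) • a .u 5 := by
    linear_combination (norm := module) r2_7 - pu1 + pz3 - px7
  have r3_1 : a .u 4 + a .z 8 - a .v 8 - a .x 1 + a .y 1 = 0 := h3 1
  have px1 : a .x 1 = -a .v 5 + a .z 1 + a .y 1 + a .y 4 + a .u 5 := by
    linear_combination (norm := module) -r3_1 + pu4 + pz8 - pv8
  have r5_7 : a .u 1 + a .w 4 - a .x 4 - a .z 3 + a .v 7 = 0 := h5 7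
  have pv7 : a .v 7 = -(3:ℤ) • a .v 5 + a .z 1 - a .w 8 + a .u 7 - (2:ℤ) • a .y 4 - (2:ℤ) • a .u 5 - a .w 4 := by
    linear_combination (norm := module) r5_7 - pu1 + px4 + pz3
  have r6_7 : a .v 6 + a .x 0 + a .z 5 + a .w 8 + a .y 7 = 0 := h6 7
  have pv6 : a .v 6 = (4:ℤ) • a .v 5 - (4:ℤ) • a .z 1 + a .y 2 + (2:ℤ) • a .y 1 - a .u 5 - a .w 4 := by
    linear_combination (norm := module) r6_7 - tx0 - tz5 - py7
  have r6_8 : a .v 7 + a .x 1 + a .z 2 + a .w 0 + a .y 8 = 0 := h6 8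
  have pz2 : a .z 2 = (3:ℤ) • a .v 5 - (2:ℤ) • a .z 1 + a .y 2 + a .w 8 - a .y 1 + a .u 5 + a .w 4 := by
    linear_combination (norm := module) r6_8 - pv7 - px1 - pw0 - ty8
  have r1_2 : a .u 7 + a .x 1 - a .y 1 - a .v 7 + a .w 2 = 0 := h1 2
  have pw2 : a .w 2 = -(2:ℤ) • a .v 5 - a .w 8 - (3:ℤ) • a .y 4 - (3:ℤ) • a .u 5 - a .w 4 := by
    linear_combination (norm := module) r1_2 - px1 + pv7
  have r2_0 : a .u 3 + a .y 2 - a .z 2 - a .w 1 + a .x 0 = 0 := h2 0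
  have pw1 : a .w 1 = -(3:ℤ) • a .v 5 + (2:ℤ) • a .z 1 - a .w 8 + a .y 1 - a .u 5 - a .w 4 := by
    linear_combination (norm := module) -r2_0 + tu3 - pz2 + tx0
  have r3_4 : a .u 5 + a .z 6 - a .v 6 - a .x 7 + a .y 4 = 0 := h3 4
  have pz6 : a .z 6 = (3:ℤ) • a .v 5 - (3:ℤ) • a .z 1 - a .u 7 + a .y 1 - a .y 4 - (2:ℤ) • a .u 5 - a .w 4 := by
    linear_combination (norm := module) r3_4 + pv6 + px7
  have r3_7 : a .u 1 + a .z 2 - a .v 2 - a .x 6 + a .y 7 = 0 := h3 7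
  have pv2 : a .v 2 = a .v 5 - (2:ℤ) • a .z 1 + a .y 2 - a .w 8 - a .y 1 + a .w 4 := by
    linear_combination (norm := module) -r3_7 + pu1 + pz2 - px6 + py7
  have r4_5 : a .u 6 + a .v 2 - a .w 2 - a .y 8 + a .z 5 = 0 := h4 5
  have pu6 : a .u 6 = -(3:ℤ) • a .v 5 + (2:ℤ) • a .z 1 - a .y 2 + a .y 1 - (3:ℤ) • a .y 4 - (3:ℤ) • a .u 5 - (2:ℤ) • a .w 4 := by
    linear_combination (norm := module) r4_5 - pv2 + pw2 + ty8 - tz5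
  have r4_6 : a .u 8 + a .v 7 - a .w 7 - a .y 4 + a .z 6 = 0 := h4 6
  have pu8 : a .u 8 = -(2:ℤ) • a .v 5 + (4:ℤ) • a .z 1 - a .y 2 + a .w 8 - (2:ℤ) • a .y 1 + (3:ℤ) • a .y 4 + (4:ℤ) • a .u 5 + (2:ℤ) • a .w 4 := by
    linear_combination (norm := module) r4_6 - pv7 + pw7 - pz6
  have r4_8 : a .u 0 + a .v 1 - a .w 1 - a .y 6 + a .z 8 = 0 := h4 8
  have py6 : a .y 6 = (5:ℤ) • a .v 5 - (3:ℤ) • a .z 1 + (2:ℤ) • a .w 8 + (2:ℤ) • a .u 5 + a .w 4 := by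
    linear_combination (norm := module) -r4_8 + pu0 + tv1 - pw1 + pz8
  have r5_3 : a .u 2 + a .w 0 - a .x 0 - a .z 6 + a .v 3 = 0 := h5 3
  have pu2 : a .u 2 = a .v 5 - (3:ℤ) • a .z 1 + (2:ℤ) • a .y 2 - a .w 8 + a .y 1 - (2:ℤ) • a .y 4 - (2:ℤ) • a .u 5 - a .w 4 := by
    linear_combination (norm := module) r5_3 - pw0 + tx0 + pz6 - pv3
  have r5_5 : a .u 6 + a .w 1 - a .x 1 - a .z 7 + a .v 5 = 0 := h5 5
  have pz7 : a .z 7 = -(4:ℤ) • a .v 5 + (3:ℤ) • a .z 1 - a .y 2 - a .w 8 + a .y 1 - (4:ℤ) • a .y 4 - (5:ℤ) • a .u 5 - (3:ℤ) • a .w 4 := by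
    linear_combination (norm := module) -r5_5 + pu6 + pw1 - px1
  have r5_8 : a .u 0 + a .w 3 - a .x 3 - a .z 2 + a .v 8 = 0 := h5 8
  have px3 : a .x 3 = a .v 5 - (2:ℤ) • a .z 1 - a .y 2 + (3:ℤ) • a .y 1 - a .u 5 - a .w 4 := by
    linear_combination (norm := module) -r5_8 + pu0 + pw3 - pz2 + pv8
  have r6_3 : a .v 4 + a .x 5 + a .z 6 + a .w 1 + a .y 3 = 0 := h6 3
  have px5 : a .x 5 = (2:ℤ) • a .v 5 + a .z 1 + a .w 8 - (4:ℤ) • a .y 1 + (3:ℤ) • a .y 4 + (5:ℤ) • a .u 5 + a .w 4 := by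
    linear_combination (norm := module) r6_3 - pv4 - pz6 - pw1 - py3
  have r6_4 : a .v 0 + a .x 2 + a .z 7 + a .w 5 + a .y 4 = 0 := h6 4
  have pw5 : a .w 5 = (4:ℤ) • a .v 5 - (3:ℤ) • a .z 1 + a .y 2 + a .w 8 - a .y 1 + (3:ℤ) • a .y 4 + (5:ℤ) • a .u 5 + (3:ℤ) • a .w 4 := by
    linear_combination (norm := module) r6_4 - tv0 - tx2 - pz7
  have r6_5 : a .v 3 + a .x 4 + a .z 8 + a .w 2 + a .y 5 = 0 := h6 5
  have py5 : a .y 5 = a .z 1 - a .w 8 - a .u 7 - a .y 1 + (3:ℤ) • a .y 4 + (2:ℤ) • a .u 5 + a .w 4 := by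
    linear_combination (norm := module) r6_5 - pv3 - px4 - pz8 - pw2
  -- The facts `f..` are what the remaining relations say about these nine classes.
  have r1_1 : a .u 4 + a .x 5 - a .y 5 - a .v 2 + a .w 1 = 0 := h1 1
  have f0 : -a .v 5 + (3:ℤ) • a .z 1 - a .y 2 + (2:ℤ) • a .w 8 - a .y 1 + a .y 4 + (2:ℤ) • a .u 5 - (2:ℤ) • a .w 4 = 0 := by
    linear_combination (norm := module) r1_1 - pu4 - px5 + py5 + pv2 - pw1
  have r1_3 : a .u 2 + a .x 3 - a .y 3 - a .v 1 + a .w 3 = 0 := h1 3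
  have f1 : (4:ℤ) • a .v 5 - (6:ℤ) • a .z 1 + a .y 2 - a .w 8 + (4:ℤ) • a .y 1 - a .u 5 - (2:ℤ) • a .w 4 = 0 := by
    linear_combination (norm := module) r1_3 - pu2 - px3 + py3 + tv1 - pw3
  have r1_5 : a .u 6 + a .x 0 - a .y 0 - a .v 6 + a .w 5 = 0 := h1 5
  have f2 : -(3:ℤ) • a .v 5 + (4:ℤ) • a .z 1 - a .y 2 + a .w 8 - (2:ℤ) • a .y 1 + (3:ℤ) • a .u 5 + (2:ℤ) • a .w 4 = 0 := by
    linear_combination (norm := module) r1_5 - pu6 - tx0 + py0 + pv6 - pw5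
  have r1_6 : a .u 8 + a .x 6 - a .y 6 - a .v 4 + a .w 6 = 0 := h1 6
  have f3 : -(6:ℤ) • a .v 5 + (12:ℤ) • a .z 1 - a .y 2 - (6:ℤ) • a .y 1 + (5:ℤ) • a .y 4 + (5:ℤ) • a .u 5 = 0 := by
    linear_combination (norm := module) r1_6 - pu8 - px6 + py6 + pv4 - pw6
  have r2_1 : a .u 4 + a .y 6 - a .z 6 - a .w 5 + a .x 1 = 0 := h2 1
  have f4 : -(2:ℤ) • a .v 5 + (3:ℤ) • a .z 1 - a .y 2 + a .w 8 + a .y 1 - a .w 4 = 0 := by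
    linear_combination (norm := module) r2_1 - pu4 - py6 + pz6 + pw5 - px1
  have r2_5 : a .u 6 + a .y 0 - a .z 0 - a .w 7 + a .x 5 = 0 := h2 5
  have f6 : a .v 5 + a .w 8 - (2:ℤ) • a .y 1 + a .y 4 + (2:ℤ) • a .u 5 - a .w 4 = 0 := by
    linear_combination (norm := module) r2_5 - pu6 - py0 + tz0 + pw7 - px5
  have r3_3 : a .u 2 + a .z 7 - a .v 7 - a .x 8 + a .y 3 = 0 := h3 3
  have f8 : -(2:ℤ) • a .v 5 + a .y 2 - (2:ℤ) • a .w 8 + (2:ℤ) • a .y 1 - (6:ℤ) • a .y 4 - (8:ℤ) • a .u 5 - (4:ℤ) • a .w 4 = 0 := by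
    linear_combination (norm := module) r3_3 - pu2 - pz7 + pv7 + px8 - py3
  have r3_5 : a .u 6 + a .z 4 - a .v 4 - a .x 3 + a .y 5 = 0 := h3 5
  have f9 : -(5:ℤ) • a .v 5 + (3:ℤ) • a .z 1 + a .y 2 - (2:ℤ) • a .w 8 - (3:ℤ) • a .y 1 - a .u 5 - a .w 4 = 0 := by
    linear_combination (norm := module) r3_5 - pu6 - pz4 + pv4 + px3 - py5
  have r3_6 : a .u 8 + a .z 3 - a .v 3 - a .x 5 + a .y 6 = 0 := h3 6
  have f10 : -a .v 5 - a .w 8 + (2:ℤ) • a .y 1 - a .y 4 - (2:ℤ) • a .u 5 + a .w 4 = 0 := by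
    linear_combination (norm := module) r3_6 - pu8 - pz3 + pv3 + px5 - py6
  have r4_2 : a .u 7 + a .v 6 - a .w 6 - a .y 3 + a .z 2 = 0 := h4 2
  have f11 : (8:ℤ) • a .v 5 - (8:ℤ) • a .z 1 + (2:ℤ) • a .y 2 + a .y 1 + a .y 4 = 0 := by
    linear_combination (norm := module) r4_2 - pv6 + pw6 + py3 - pz2
  have r4_3 : a .u 2 + a .v 5 - a .w 5 - a .y 7 + a .z 3 = 0 := h4 3
  have f12 : a .v 5 - (4:ℤ) • a .z 1 + (2:ℤ) • a .y 2 - (3:ℤ) • a .w 8 + (4:ℤ) • a .y 1 - (6:ℤ) • a .y 4 - (11:ℤ) • a .u 5 - (6:ℤ) • a .w 4 = 0 := by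
    linear_combination (norm := module) r4_3 - pu2 + pw5 + py7 - pz3
  have r4_7 : a .u 1 + a .v 8 - a .w 8 - a .y 5 + a .z 7 = 0 := h4 7
  have f13 : a .v 5 - (2:ℤ) • a .z 1 - a .w 8 + (3:ℤ) • a .y 1 - (6:ℤ) • a .y 4 - (8:ℤ) • a .u 5 - (5:ℤ) • a .w 4 = 0 := by
    linear_combination (norm := module) r4_7 - pu1 - pv8 + py5 - pz7
  have r6_6 : a .v 2 + a .x 3 + a .z 1 + a .w 4 + a .y 6 = 0 := h6 6
  have f15 : (7:ℤ) • a .v 5 - (6:ℤ) • a .z 1 + a .w 8 + (2:ℤ) • a .y 1 + a .u 5 + (2:ℤ) • a .w 4 = 0 := by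
    linear_combination (norm := module) r6_6 - pv2 - px3 - py6
  -- The multipliers below come from the Smith normal form of the matrix with rows `f..`.
  have o1 : (5:ℤ) • a .v 2 = 0 := by
    linear_combination (norm := module) f2 - (7:ℤ) • f4 - (5:ℤ) • f6 - (3:ℤ) • f9 - (4:ℤ) • f10 + f11 - (4:ℤ) • f15 + (5:ℤ) • pv2
  have o2 : (5:ℤ) • a .y 7 = 0 := by
    linear_combination (norm := module) -(2:ℤ) • f0 + f1 + f3 + (2:ℤ) • f6 - f8 + (4:ℤ) • f9 + (2:ℤ) • f10 - (3:ℤ) • f11 - (2:ℤ) •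
      f12 + (3:ℤ) • f13 + (3:ℤ) • f15 + (5:ℤ) • py7
  have o3 : (420:ℤ) • a .z 2 = 0 := by
    linear_combination (norm := module) -(144:ℤ) • f1 + (371:ℤ) • f2 - (24:ℤ) • f3 - (412:ℤ) • f4 - (743:ℤ) • f6 + (57:ℤ) • f8 -
      (622:ℤ) • f9 - (673:ℤ) • f10 + (532:ℤ) • f11 - (743:ℤ) • f15 + (420:ℤ) • pz2
  -- The facts `q..` give all classes, the nine chosen ones first, in terms of `v8, v2, y7, z2`.
  have qv5 : a .v 5 =
      (0:ℤ) • a .v 8 + (-2:ℤ) • a .v 2 + (-2:ℤ) • a .y 7 + (60:ℤ) • a .z 2 := by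
    linear_combination (norm := module) (21:ℤ) • f1 - (53:ℤ) • f2 + (4:ℤ) • f3 + (53:ℤ) • f4 + (105:ℤ) • f6 - (8:ℤ) • f8 + (87:ℤ)
      • f9 + (95:ℤ) • f10 - (78:ℤ) • f11 + (105:ℤ) • f15 + (2:ℤ) • pv2 + (2:ℤ) • py7 - (60:ℤ) •
      pz2
  have qz1 : a .z 1 =
      (0:ℤ) • a .v 8 + (-1:ℤ) • a .v 2 + (-2:ℤ) • a .y 7 + (60:ℤ) • a .z 2 := by
    linear_combination (norm := module) (21:ℤ) • f1 - (53:ℤ) • f2 + (4:ℤ) • f3 + (55:ℤ) • f4 + (106:ℤ) • f6 - (8:ℤ) • f8 + (88:ℤ)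
      • f9 + (96:ℤ) • f10 - (78:ℤ) • f11 + (106:ℤ) • f15 + pv2 + (2:ℤ) • py7 - (60:ℤ) • pz2
  have qy2 : a .y 2 =
      (0:ℤ) • a .v 8 + (-1:ℤ) • a .v 2 + (1:ℤ) • a .y 7 + (126:ℤ) • a .z 2 := by
    linear_combination (norm := module) (43:ℤ) • f1 - (110:ℤ) • f2 + (7:ℤ) • f3 + (124:ℤ) • f4 + (222:ℤ) • f6 - (17:ℤ) • f8 +
      (186:ℤ) • f9 + (202:ℤ) • f10 - (157:ℤ) • f11 + (221:ℤ) • f15 + pv2 - py7 - (126:ℤ) • pz2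
  have qw8 : a .w 8 =
      (0:ℤ) • a .v 8 + (2:ℤ) • a .v 2 + (1:ℤ) • a .y 7 + (95:ℤ) • a .z 2 := by
    linear_combination (norm := module) (32:ℤ) • f1 - (84:ℤ) • f2 + (5:ℤ) • f3 + (98:ℤ) • f4 + (170:ℤ) • f6 - (13:ℤ) • f8 +
      (142:ℤ) • f9 + (154:ℤ) • f10 - (119:ℤ) • f11 + (169:ℤ) • f15 - (2:ℤ) • pv2 - py7 - (95:ℤ)
      • pz2
  have qu7 : a .u 7 =
      (-1:ℤ) • a .v 8 + (0:ℤ) • a .v 2 + (-2:ℤ) • a .y 7 + (14:ℤ) • a .z 2 := by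
    linear_combination (norm := module) (5:ℤ) • f1 - (13:ℤ) • f2 + f3 + (11:ℤ) • f4 + (25:ℤ) • f6 - (2:ℤ) • f8 + (20:ℤ) • f9 +
      (22:ℤ) • f10 - (20:ℤ) • f11 + (25:ℤ) • f15 + pv8 + (2:ℤ) • py7 - (14:ℤ) • pz2
  have qy1 : a .y 1 =
      (0:ℤ) • a .v 8 + (1:ℤ) • a .v 2 + (2:ℤ) • a .y 7 + (-81:ℤ) • a .z 2 := by
    linear_combination (norm := module) -(28:ℤ) • f1 + (72:ℤ) • f2 - (5:ℤ) • f3 - (75:ℤ) • f4 - (143:ℤ) • f6 + (11:ℤ) • f8 -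
      (119:ℤ) • f9 - (129:ℤ) • f10 + (105:ℤ) • f11 - (143:ℤ) • f15 - pv2 - (2:ℤ) • py7 + (81:ℤ)
      • pz2
  have qy4 : a .y 4 =
      (0:ℤ) • a .v 8 + (-1:ℤ) • a .v 2 + (1:ℤ) • a .y 7 + (-171:ℤ) • a .z 2 := by
    linear_combination (norm := module) -(59:ℤ) • f1 + (151:ℤ) • f2 - (10:ℤ) • f3 - (168:ℤ) • f4 - (304:ℤ) • f6 + (23:ℤ) • f8 -
      (254:ℤ) • f9 - (275:ℤ) • f10 + (218:ℤ) • f11 - (304:ℤ) • f15 + pv2 - py7 + (171:ℤ) • pz2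
  have qu5 : a .u 5 =
      (0:ℤ) • a .v 8 + (-1:ℤ) • a .v 2 + (2:ℤ) • a .y 7 + (111:ℤ) • a .z 2 := by
    linear_combination (norm := module) (38:ℤ) • f1 - (97:ℤ) • f2 + (6:ℤ) • f3 + (109:ℤ) • f4 + (195:ℤ) • f6 - (15:ℤ) • f8 +
      (163:ℤ) • f9 + (177:ℤ) • f10 - (138:ℤ) • f11 + (194:ℤ) • f15 + pv2 - (2:ℤ) • py7 - (111:ℤ)
      • pz2
  have qw4 : a .w 4 =
      (0:ℤ) • a .v 8 + (0:ℤ) • a .v 2 + (0:ℤ) • a .y 7 + (-52:ℤ) • a .z 2 := by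
    linear_combination (norm := module) -(18:ℤ) • f1 + (46:ℤ) • f2 - (3:ℤ) • f3 - (51:ℤ) • f4 - (92:ℤ) • f6 + (7:ℤ) • f8 - (77:ℤ)
      • f9 - (83:ℤ) • f10 + (66:ℤ) • f11 - (92:ℤ) • f15 + (52:ℤ) • pz2
  have qw3 : a .w 3 =
      (-1:ℤ) • a .v 8 + (2:ℤ) • a .v 2 + (2:ℤ) • a .y 7 + (-127:ℤ) • a .z 2 := by
    linear_combination (norm := module) pw3 - qz1 + qu7 + qy1
  have qy0 : a .y 0 =
      (0:ℤ) • a .v 8 + (1:ℤ) • a .v 2 + (2:ℤ) • a .y 7 + (-60:ℤ) • a .z 2 := by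
    linear_combination (norm := module) py0 - qz1
  have qx4 : a .x 4 =
      (-1:ℤ) • a .v 8 + (-1:ℤ) • a .v 2 + (-1:ℤ) • a .y 7 + (140:ℤ) • a .z 2 := by
    linear_combination (norm := module) px4 + qy2 + qu7
  have qu0 : a .u 0 =
      (0:ℤ) • a .v 8 + (-2:ℤ) • a .v 2 + (-2:ℤ) • a .y 7 + (60:ℤ) • a .z 2 := by
    linear_combination (norm := module) pu0 + qv5
  have qv4 : a .v 4 =
      (0:ℤ) • a .v 8 + (1:ℤ) • a .v 2 + (2:ℤ) • a .y 7 + (-133:ℤ) • a .z 2 := by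
    linear_combination (norm := module) pv4 + qy1 + qw4
  have qx8 : a .x 8 =
      (0:ℤ) • a .v 8 + (-2:ℤ) • a .v 2 + (2:ℤ) • a .y 7 + (13:ℤ) • a .z 2 := by
    linear_combination (norm := module) px8 - qz1 + qw8 + qy1 + qu5 + qw4 + o1 + o2
  have qx7 : a .x 7 =
      (1:ℤ) • a .v 8 + (1:ℤ) • a .v 2 + (-1:ℤ) • a .y 7 + (-59:ℤ) • a .z 2 := by
    linear_combination (norm := module) px7 - qv5 + qz1 - qy2 - qu7 - qy1
  have qw0 : a .w 0 =
      (1:ℤ) • a .v 8 + (-2:ℤ) • a .v 2 + (0:ℤ) • a .y 7 + (169:ℤ) • a .z 2 := by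
    linear_combination (norm := module) pw0 + qv5 - qy2 - qu7 + qy4 - o3
  have qv3 : a .v 3 =
      (0:ℤ) • a .v 8 + (1:ℤ) • a .v 2 + (-2:ℤ) • a .y 7 + (29:ℤ) • a .z 2 := by
    linear_combination (norm := module) pv3 + qv5 - qy2 + qw8
  have qz8 : a .z 8 =
      (0:ℤ) • a .v 8 + (1:ℤ) • a .v 2 + (0:ℤ) • a .y 7 + (125:ℤ) • a .z 2 := by
    linear_combination (norm := module) pz8 + qv5 - qz1 + qw8 + qy1 + qu5 + o2
  have qu4 : a .u 4 =
      (1:ℤ) • a .v 8 + (-2:ℤ) • a .v 2 + (-2:ℤ) • a .y 7 + (-185:ℤ) • a .z 2 := by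
    linear_combination (norm := module) pu4 + qv5 - qz1 - qu7 + qy4 + o2
  have qz4 : a .z 4 =
      (-1:ℤ) • a .v 8 + (-2:ℤ) • a .v 2 + (-1:ℤ) • a .y 7 + (93:ℤ) • a .z 2 := by
    linear_combination (norm := module) pz4 - qv5 - (2:ℤ) • qz1 + qy2 - qw8 + qu7 + qy1 - qu5 + o1 + o2 - o3
  have qw7 : a .w 7 =
      (0:ℤ) • a .v 8 + (-2:ℤ) • a .v 2 + (1:ℤ) • a .y 7 + (126:ℤ) • a .z 2 := by
    linear_combination (norm := module) pw7 - (2:ℤ) • qv5 + (2:ℤ) • qz1 - qy2 - qy1 - qy4 + o1 - o2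
  have qu1 : a .u 1 =
      (0:ℤ) • a .v 8 + (-1:ℤ) • a .v 2 + (2:ℤ) • a .y 7 + (-139:ℤ) • a .z 2 := by
    linear_combination (norm := module) pu1 + (2:ℤ) • qv5 - qz1 + qy2 - qw8 + qy4 - qu5 - qw4 - o1 - o2
  have qw6 : a .w 6 =
      (0:ℤ) • a .v 8 + (-1:ℤ) • a .v 2 + (-2:ℤ) • a .y 7 + (-13:ℤ) • a .z 2 := by
    linear_combination (norm := module) pw6 + qv5 + (2:ℤ) • qz1 + qw8 - qy1 + qy4 + (2:ℤ) • qu5 - o1 + o3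
  have qx6 : a .x 6 =
      (0:ℤ) • a .v 8 + (-2:ℤ) • a .v 2 + (-2:ℤ) • a .y 7 + (-138:ℤ) • a .z 2 := by
    linear_combination (norm := module) px6 + (3:ℤ) • qz1 - (2:ℤ) • qy1 + qy4 + qu5 - o1 - o2 + o3
  have qz3 : a .z 3 =
      (0:ℤ) • a .v 8 + (2:ℤ) • a .v 2 + (-2:ℤ) • a .y 7 + (60:ℤ) • a .z 2 := by
    linear_combination (norm := module) pz3 - qv5 - (2:ℤ) • qw8 - qy4 - (3:ℤ) • qu5 - qw4 - o2 - o3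
  have qv8 : a .v 8 =
      (1:ℤ) • a .v 8 + (0:ℤ) • a .v 2 + (0:ℤ) • a .y 7 + (0:ℤ) • a .z 2 := by
    linear_combination (norm := module) pv8 + (3:ℤ) • qv5 - (3:ℤ) • qz1 + qw8 - qu7 + qy1 + o2
  have qy7 : a .y 7 =
      (0:ℤ) • a .v 8 + (0:ℤ) • a .v 2 + (1:ℤ) • a .y 7 + (0:ℤ) • a .z 2 := by
    linear_combination (norm := module) py7 - (4:ℤ) • qv5 + (4:ℤ) • qz1 - qy2 - qw8 - (2:ℤ) • qy1 + qu5 + qw4 - o2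
  have qy3 : a .y 3 =
      (-1:ℤ) • a .v 8 + (-1:ℤ) • a .v 2 + (-2:ℤ) • a .y 7 + (-67:ℤ) • a .z 2 := by
    linear_combination (norm := module) py3 - (2:ℤ) • qv5 + qu7 + qy1 - (2:ℤ) • qy4 - (2:ℤ) • qu5 + (2:ℤ) • o1
  have qx1 : a .x 1 =
      (0:ℤ) • a .v 8 + (0:ℤ) • a .v 2 + (0:ℤ) • a .y 7 + (-141:ℤ) • a .z 2 := by
    linear_combination (norm := module) px1 - qv5 + qz1 + qy1 + qy4 + qu5 + o2
  have qv7 : a .v 7 =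
      (-1:ℤ) • a .v 8 + (2:ℤ) • a .v 2 + (0:ℤ) • a .y 7 + (-29:ℤ) • a .z 2 := by
    linear_combination (norm := module) pv7 - (3:ℤ) • qv5 + qz1 - qw8 + qu7 - (2:ℤ) • qy4 - (2:ℤ) • qu5 - qw4 + o1 - o2
  have qv6 : a .v 6 =
      (0:ℤ) • a .v 8 + (-2:ℤ) • a .v 2 + (-2:ℤ) • a .y 7 + (-95:ℤ) • a .z 2 := by
    linear_combination (norm := module) pv6 + (4:ℤ) • qv5 - (4:ℤ) • qz1 + qy2 + (2:ℤ) • qy1 - qu5 - qw4 + o2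
  have qz2 : a .z 2 =
      (0:ℤ) • a .v 8 + (0:ℤ) • a .v 2 + (0:ℤ) • a .y 7 + (1:ℤ) • a .z 2 := by
    linear_combination (norm := module) pz2 + (3:ℤ) • qv5 - (2:ℤ) • qz1 + qy2 + qw8 - qy1 + qu5 + qw4 - o1 + o3
  have qw2 : a .w 2 =
      (0:ℤ) • a .v 8 + (-2:ℤ) • a .v 2 + (-1:ℤ) • a .y 7 + (17:ℤ) • a .z 2 := by
    linear_combination (norm := module) pw2 - (2:ℤ) • qv5 - qw8 - (3:ℤ) • qy4 - (3:ℤ) • qu5 - qw4 + (2:ℤ) • o1 - o2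
  have qw1 : a .w 1 =
      (0:ℤ) • a .v 8 + (-1:ℤ) • a .v 2 + (1:ℤ) • a .y 7 + (125:ℤ) • a .z 2 := by
    linear_combination (norm := module) pw1 - (3:ℤ) • qv5 + (2:ℤ) • qz1 - qw8 + qy1 - qu5 - qw4 + o1 - o3
  have qz6 : a .z 6 =
      (1:ℤ) • a .v 8 + (1:ℤ) • a .v 2 + (-1:ℤ) • a .y 7 + (-94:ℤ) • a .z 2 := by
    linear_combination (norm := module) pz6 + (3:ℤ) • qv5 - (3:ℤ) • qz1 - qu7 + qy1 - qy4 - (2:ℤ) • qu5 - qw4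
  have qv2 : a .v 2 =
      (0:ℤ) • a .v 8 + (1:ℤ) • a .v 2 + (0:ℤ) • a .y 7 + (0:ℤ) • a .z 2 := by
    linear_combination (norm := module) pv2 + qv5 - (2:ℤ) • qz1 + qy2 - qw8 - qy1 + qw4 - o1
  have qu6 : a .u 6 =
      (0:ℤ) • a .v 8 + (2:ℤ) • a .v 2 + (-1:ℤ) • a .y 7 + (17:ℤ) • a .z 2 := by
    linear_combination (norm := module) pu6 - (3:ℤ) • qv5 + (2:ℤ) • qz1 - qy2 + qy1 - (3:ℤ) • qy4 - (3:ℤ) • qu5 - (2:ℤ) • qw4 +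
      (2:ℤ) • o1 - o2
  have qu8 : a .u 8 =
      (0:ℤ) • a .v 8 + (-1:ℤ) • a .v 2 + (-2:ℤ) • a .y 7 + (78:ℤ) • a .z 2 := by
    linear_combination (norm := module) pu8 - (2:ℤ) • qv5 + (4:ℤ) • qz1 - qy2 + qw8 - (2:ℤ) • qy1 + (3:ℤ) • qy4 + (4:ℤ) • qu5 +
      (2:ℤ) • qw4 - o1 + o2
  have qy6 : a .y 6 =
      (0:ℤ) • a .v 8 + (0:ℤ) • a .v 2 + (2:ℤ) • a .y 7 + (60:ℤ) • a .z 2 := by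
    linear_combination (norm := module) py6 + (5:ℤ) • qv5 - (3:ℤ) • qz1 + (2:ℤ) • qw8 + (2:ℤ) • qu5 + qw4 - o1 + o3
  have qu2 : a .u 2 =
      (0:ℤ) • a .v 8 + (2:ℤ) • a .v 2 + (1:ℤ) • a .y 7 + (128:ℤ) • a .z 2 := by
    linear_combination (norm := module) pu2 + qv5 - (3:ℤ) • qz1 + (2:ℤ) • qy2 - qw8 + qy1 - (2:ℤ) • qy4 - (2:ℤ) • qu5 - qw4
  have qz7 : a .z 7 =
      (0:ℤ) • a .v 8 + (-1:ℤ) • a .v 2 + (-2:ℤ) • a .y 7 + (-77:ℤ) • a .z 2 := by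
    linear_combination (norm := module) pz7 - (4:ℤ) • qv5 + (3:ℤ) • qz1 - qy2 - qw8 + qy1 - (4:ℤ) • qy4 - (5:ℤ) • qu5 - (3:ℤ) •
      qw4 + (3:ℤ) • o1 - (2:ℤ) • o2
  have qx3 : a .x 3 =
      (0:ℤ) • a .v 8 + (0:ℤ) • a .v 2 + (0:ℤ) • a .y 7 + (-68:ℤ) • a .z 2 := by
    linear_combination (norm := module) px3 + qv5 - (2:ℤ) • qz1 - qy2 + (3:ℤ) • qy1 - qu5 - qw4 + o1 + o2 - o3
  have qx5 : a .x 5 =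
      (0:ℤ) • a .v 8 + (0:ℤ) • a .v 2 + (0:ℤ) • a .y 7 + (169:ℤ) • a .z 2 := by
    linear_combination (norm := module) px5 + (2:ℤ) • qv5 + qz1 + qw8 - (4:ℤ) • qy1 + (3:ℤ) • qy4 + (5:ℤ) • qu5 + qw4 - (3:ℤ) • o1
      + o3
  have qw5 : a .w 5 =
      (0:ℤ) • a .v 8 + (2:ℤ) • a .v 2 + (1:ℤ) • a .y 7 + (-172:ℤ) • a .z 2 := by
    linear_combination (norm := module) pw5 + (4:ℤ) • qv5 - (3:ℤ) • qz1 + qy2 + qw8 - qy1 + (3:ℤ) • qy4 + (5:ℤ) • qu5 + (3:ℤ) •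
      qw4 - (3:ℤ) • o1 + (2:ℤ) • o2 + o3
  have qy5 : a .y 5 =
      (1:ℤ) • a .v 8 + (1:ℤ) • a .v 2 + (-1:ℤ) • a .y 7 + (109:ℤ) • a .z 2 := by
    linear_combination (norm := module) py5 + qz1 - qw8 - qu7 - qy1 + (3:ℤ) • qy4 + (2:ℤ) • qu5 + qw4 - (2:ℤ) • o1 + o2 - o3
  refine ⟨o1, o2, o3, ?_⟩
  intro g i
  cases g <;> fin_cases i
  · exact qu0
  · exact qu1
  · exact qu2
  · exact tu3.trans (by simp [tab])
  · exact qu4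
  · exact qu5
  · exact qu6
  · exact qu7
  · exact qu8
  · exact tv0.trans (by simp [tab])
  · exact tv1.trans (by simp [tab])
  · exact qv2
  · exact qv3
  · exact qv4
  · exact qv5
  · exact qv6
  · exact qv7
  · exact qv8
  · exact qw0
  · exact qw1
  · exact qw2
  · exact qw3
  · exact qw4
  · exact qw5
  · exact qw6
  · exact qw7
  · exact qw8
  · exact tx0.trans (by simp [tab])
  · exact qx1
  · exact tx2.trans (by simp [tab])
  · exact qx3
  · exact qx4
  · exact qx5
  · exact qx6
  · exact qx7
  · exact qx8
  · exact qy0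
  · exact qy1
  · exact qy2
  · exact qy3
  · exact qy4
  · exact qy5
  · exact qy6
  · exact qy7
  · exact ty8.trans (by simp [tab])
  · exact tz0.trans (by simp [tab])
  · exact qz1
  · exact qz2
  · exact qz3
  · exact qz4
  · exact tz5.trans (by simp [tab])
  · exact qz6
  · exact qz7
  · exact qz8

/-! ### The homomorphism to the wreath product -/

/-- The target: the expected first homology group of the cover. -/
abbrev M : Type := ℤ × ZMod 3 × ZMod 4 × (Fin 3 → ZMod 5) × ZMod 7

/-- The quotient map from `ℤ⁴` to `M ≅ ℤ × ℤ/5 × ℤ/5 × ℤ/420`; the cyclic factor of order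
`420 = 3 * 4 * 5 * 7` is split by the Chinese remainder theorem, and its `5`-part is the last
coordinate of `(ℤ/5)³`. -/
def q (n : ℤ × ℤ × ℤ × ℤ) : M := (n.1, n.2.2.2, n.2.2.2, ![n.2.1, n.2.2.1, n.2.2.2], n.2.2.2)

/-- The wreath product of `M` with the symmetric group on nine points. -/
abbrev W : Type := (Fin 9 → Multiplicative M) ⋊[mulAutArrow] Equiv.Perm (Fin 9)

instance : DecidableEq (Multiplicative M) := inferInstanceAs (DecidableEq M)

/-- The image of a generator in the wreath product. An element of `W` carries its `M`-component
at the target of an arrow, so the entry of `tab` is the one at the preimage of `i`. -/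
def genW (g : Gen) : W :=
  ⟨fun i => Multiplicative.ofAdd (q (tab g ((sig g)⁻¹ i))), sig g⟩

theorem genW_rel : ∀ r ∈ wsRels, FreeGroup.lift genW r = 1 := by
  intro r hr
  rcases hr with rfl | rfl | rfl | rfl | rfl | rfl <;>
  · simp only [map_mul, map_inv, FreeGroup.lift_apply_of]
    refine SemidirectProduct.ext ?_ ?_
    · funext i
      revert i
      decide +kernel
    · decide +kernel

/-- The homomorphism from `G` to the wreath product given by `genW`. -/
def Φ : G →* W := PresentedGroup.toGroup genW_rel

theorem Φ_of (g : Gen) : Φ (PresentedGroup.of g) = genW g := PresentedGroup.toGroup.of genW_rel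

/-- The action of `G` on the nine points. -/
instance : MulAction G (Fin 9) := MulAction.compHom (Fin 9) (SemidirectProduct.rightHom.comp Φ)

theorem smul_eq (g : G) (i : Fin 9) : g • i = (Φ g).right i := rfl

/-- The `M`-valued cocycle on `G` and the nine points: the label of the arrow from `i` to
`g • i`. -/
def cocycle (g : G) (i : Fin 9) : M := ((Φ g).left (g • i)).toAdd

theorem cocycle_mul (g h : G) (i : Fin 9) :
    cocycle (g * h) i = cocycle g (h • i) + cocycle h i := by
  have h' : cocycle (g * h) i =
      cocycle g (h • i) + ((Φ h).left ((Φ g).right⁻¹ ((Φ g).right (h • i)))).toAdd := by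
    simp only [cocycle, smul_eq, map_mul]
    rfl
  rw [h', ← Equiv.Perm.mul_apply, inv_mul_cancel]
  rfl

theorem of_smul (g : Gen) (i : Fin 9) : (PresentedGroup.of g : G) • i = sig g i := by
  rw [smul_eq, Φ_of]; rfl

theorem cocycle_of (g : Gen) (i : Fin 9) : cocycle (PresentedGroup.of g) i = q (tab g i) := by
  simp [cocycle, smul_eq, Φ_of, genW]

theorem of_inv_smul (g : Gen) (i : Fin 9) :
    (PresentedGroup.of g : G)⁻¹ • i = (sig g)⁻¹ i := by
  rw [inv_smul_eq_iff, of_smul]; simp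


/-! ### The subgroup of index nine and its Schreier elements -/

/-- The subgroup of index nine: the stabilizer of the point `0`. -/
def K : Subgroup G := MulAction.stabilizer G (0 : Fin 9)

theorem mem_K (g : G) : g ∈ K ↔ g • (0 : Fin 9) = 0 := MulAction.mem_stabilizer_iff

/-- A Schreier transversal: `rep i` moves the base point `0` to `i`. -/
def rep : Fin 9 → G :=
  ![1, v⁻¹, x⁻¹, u⁻¹, v, z⁻¹, x, z, y⁻¹]

theorem rep_smul (i : Fin 9) : rep i • (0 : Fin 9) = i := by
  fin_cases i <;>
    simp [rep, u, v, x, y, z, inv_smul_eq_iff, of_smul] <;> rfl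

/-- The cocycle vanishes along the Schreier tree, as `tab` is zero on its edges. -/
theorem cocycle_rep (i : Fin 9) : cocycle (rep i) 0 = 0 := by
  have h1 : cocycle 1 0 = 0 := by simpa using cocycle_mul 1 1 0
  have hinv (g : Gen) (i : Fin 9) :
      cocycle (PresentedGroup.of g)⁻¹ i = - q (tab g ((PresentedGroup.of g : G)⁻¹ • i)) := by
    have h := cocycle_mul (PresentedGroup.of g)⁻¹ (PresentedGroup.of g)
      ((PresentedGroup.of g : G)⁻¹ • i)
    have h1' : cocycle 1 ((PresentedGroup.of g : G)⁻¹ • i) = 0 := by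
      simpa using cocycle_mul 1 1 ((PresentedGroup.of g : G)⁻¹ • i)
    rw [inv_mul_cancel, h1', smul_inv_smul, cocycle_of] at h
    exact eq_neg_of_add_eq_zero_left h.symm
  fin_cases i
  · exact h1
  all_goals
    simp only [rep, u, v, x, y, z, Fin.reduceFinMk, Matrix.cons_val]
    first
    | rw [hinv, of_inv_smul]; decide +kernel
    | rw [cocycle_of]; decide +kernel

theorem index_K : K.index = 9 := by
  have : MulAction.IsPretransitive G (Fin 9) :=
    (MulAction.isPretransitive_iff_base 0).2 fun i => ⟨rep i, rep_smul i⟩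
  exact (MulAction.index_stabilizer_of_transitive G (0 : Fin 9)).trans (by simp)

/-- The Schreier element of `K` for `g` and the point `i`. -/
def schreier (g : G) (i : Fin 9) : K :=
  ⟨(rep (g • i))⁻¹ * g * rep i, by
    rw [mem_K, mul_smul, mul_smul, rep_smul, inv_smul_eq_iff, rep_smul]⟩

/-- The class of the Schreier element in the abelianization of `K`, written additively. -/
def sch (g : G) (i : Fin 9) : Additive (Abelianization K) :=
  Additive.ofMul (Abelianization.of (schreier g i))

theorem sch_mul (g h : G) (i : Fin 9) : sch (g * h) i = sch g (h • i) + sch h i := by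
  rw [sch, sch, sch, ← ofMul_mul, ← map_mul]
  congr 2
  apply Subtype.ext
  simp only [schreier, Subgroup.coe_mul, mul_smul]
  group

theorem sch_one (i : Fin 9) : sch 1 i = 0 := by
  simpa using sch_mul 1 1 i

theorem sch_inv (g : G) (i : Fin 9) : sch g⁻¹ i = - sch g (g⁻¹ • i) := by
  have h := sch_mul g g⁻¹ i
  rw [mul_inv_cancel, sch_one] at h
  exact eq_neg_of_add_eq_zero_right h.symm

/-- At the base point, the Schreier element of `k : K` is `k` itself. -/
theorem sch_of_mem (k : K) : sch k 0 = Additive.ofMul (Abelianization.of k) := by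
  have hk : (k : G) • (0 : Fin 9) = 0 := (mem_K _).1 k.2
  rw [sch]
  congr 2
  apply Subtype.ext
  simp [schreier, hk, rep]

/-- The cocycle at the base point, as a homomorphism on `K`. -/
def phiK : K →* Multiplicative M where
  toFun k := Multiplicative.ofAdd (cocycle k 0)
  map_one' := by
    have : cocycle 1 0 = 0 := by simpa using cocycle_mul 1 1 0
    simp [this]
  map_mul' k l := by
    rw [Subgroup.coe_mul, cocycle_mul, (mem_K _).1 l.2]; rfl

/-- The homomorphism induced by `phiK` on the abelianization. -/
def phi : Additive (Abelianization K) →+ M :=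
  MonoidHom.toAdditiveLeft (Abelianization.lift phiK)

theorem phi_of (k : K) : phi (Additive.ofMul (Abelianization.of k)) = cocycle k 0 := rfl

/-- Because the cocycle vanishes on the transversal, `phi` maps the class of each Schreier element
to the corresponding value of the cocycle. -/
theorem phi_sch (g : G) (i : Fin 9) : phi (sch g i) = cocycle g i := by
  have h := cocycle_mul (rep (g • i)) (schreier g i) 0
  have hk : (schreier g i : G) • (0 : Fin 9) = 0 := (mem_K _).1 (schreier g i).2
  rw [hk, cocycle_rep, zero_add] at h
  rw [sch, phi_of, ← h]
  have h2 : rep (g • i) * (schreier g i : G) = g * rep i := by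
    simp [schreier]; group
  rw [h2, cocycle_mul, cocycle_rep, rep_smul, add_zero]

theorem sch_rel (r : FreeGroup Gen) (hr : r ∈ wsRels) (i : Fin 9) :
    sch (PresentedGroup.mk wsRels r) i = 0 := by
  rw [PresentedGroup.mk_eq_one_iff.2 (Subgroup.subset_normalClosure hr), sch_one]

theorem sch_of_inv (g : Gen) (i : Fin 9) :
    sch (PresentedGroup.of g)⁻¹ i = - sch (PresentedGroup.of g) ((sig g)⁻¹ i) := by
  rw [sch_inv, of_inv_smul]

/-- Edges of the Schreier tree have trivial Schreier elements. -/
theorem sch_tree (g : Gen) (i : Fin 9)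
    (h : (PresentedGroup.of g : G) * rep i = rep (sig g i)) : sch (PresentedGroup.of g) i = 0 := by
  have : schreier (PresentedGroup.of g) i = 1 := by
    apply Subtype.ext
    simp [schreier, of_smul, mul_assoc, h]
  rw [sch, this, map_one, ofMul_one]

/-- The case of `solve_relations` in which the unknowns are the Schreier classes. -/
theorem sch_gen :
    (5:ℤ) • sch v 2 = 0 ∧ (5:ℤ) • sch y 7 = 0 ∧ (420:ℤ) • sch z 2 = 0 ∧
    ∀ g i, sch (PresentedGroup.of g) i = (tab g i).1 • sch v 8 + (tab g i).2.1 • sch v 2 +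
      (tab g i).2.2.1 • sch y 7 + (tab g i).2.2.2 • sch z 2 := by
  refine solve_relations (fun g i => sch (PresentedGroup.of g) i) ?_ ?_ ?_ ?_ ?_ ?_ ?_ ?_ ?_ ?_ ?_ ?_ ?_ ?_
  · exact sch_tree .u 3 (mul_inv_cancel _)
  · exact sch_tree .v 0 (mul_one _)
  · exact sch_tree .v 1 (mul_inv_cancel _)
  · exact sch_tree .x 0 (mul_one _)
  · exact sch_tree .x 2 (mul_inv_cancel _)
  · exact sch_tree .y 8 (mul_inv_cancel _)
  · exact sch_tree .z 0 (mul_one _)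
  · exact sch_tree .z 5 (mul_inv_cancel _)
  · intro i
    have h := sch_rel _ (Or.inl rfl) i
    simpa only [map_mul, map_inv, ← PresentedGroup.of.eq_1, sch_mul, sch_of_inv, of_smul,
      of_inv_smul, ← sub_eq_add_neg] using h
  · intro i
    have h := sch_rel _ (Or.inr (Or.inl rfl)) i
    simpa only [map_mul, map_inv, ← PresentedGroup.of.eq_1, sch_mul, sch_of_inv, of_smul,
      of_inv_smul, ← sub_eq_add_neg] using h
  · intro i
    have h := sch_rel _ (Or.inr (Or.inr (Or.inl rfl))) i
    simpa only [map_mul, map_inv, ← PresentedGroup.of.eq_1, sch_mul, sch_of_inv, of_smul,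
      of_inv_smul, ← sub_eq_add_neg] using h
  · intro i
    have h := sch_rel _ (Or.inr (Or.inr (Or.inr (Or.inl rfl)))) i
    simpa only [map_mul, map_inv, ← PresentedGroup.of.eq_1, sch_mul, sch_of_inv, of_smul,
      of_inv_smul, ← sub_eq_add_neg] using h
  · intro i
    have h := sch_rel _ (Or.inr (Or.inr (Or.inr (Or.inr (Or.inl rfl))))) i
    simpa only [map_mul, map_inv, ← PresentedGroup.of.eq_1, sch_mul, sch_of_inv, of_smul,
      of_inv_smul, ← sub_eq_add_neg] using h
  · intro i
    have h := sch_rel _ (Or.inr (Or.inr (Or.inr (Or.inr (Or.inr rfl))))) i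
    simpa only [map_mul, map_inv, ← PresentedGroup.of.eq_1, sch_mul, sch_of_inv, of_smul,
      of_inv_smul, ← sub_eq_add_neg] using h

/-! ### The isomorphism -/

/-- The homomorphism from `ℤ⁴` to the abelianization of `K` given by the four generating classes. -/
def psi : ℤ × ℤ × ℤ × ℤ →+ Additive (Abelianization K) where
  toFun n := n.1 • sch v 8 + n.2.1 • sch v 2 + n.2.2.1 • sch y 7 + n.2.2.2 • sch z 2
  map_zero' := by simp
  map_add' m n := by
    simp only [Prod.fst_add, Prod.snd_add, add_smul]
    abel

theorem psi_surjective : Function.Surjective psi := by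
  have hgen (g : Gen) (i : Fin 9) : sch (PresentedGroup.of g) i ∈ psi.range :=
    ⟨tab g i, (sch_gen.2.2.2 g i).symm⟩
  have hall (g : G) : ∀ i, sch g i ∈ psi.range := by
    have hg : g ∈ Subgroup.closure (Set.range (PresentedGroup.of (rels := wsRels))) := by
      rw [PresentedGroup.closure_range_of]; trivial
    induction hg using Subgroup.closure_induction with
    | mem g hg =>
      obtain ⟨g, rfl⟩ := hg
      exact hgen g
    | one =>
      intro i
      rw [sch_one]
      exact zero_mem _
    | mul g h _ _ ihg ihh =>
      intro i
      rw [sch_mul]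
      exact add_mem (ihg _) (ihh _)
    | inv g _ ih =>
      intro i
      rw [sch_inv]
      exact neg_mem (ih _)
  intro a
  obtain ⟨k, hk⟩ := QuotientGroup.mk_surjective a.toMul
  have h := hall k 0
  rw [sch_of_mem] at h
  have ha : Additive.ofMul (Abelianization.of k) = a := congrArg Additive.ofMul hk
  rwa [ha] at h

theorem phi_psi (n : ℤ × ℤ × ℤ × ℤ) : phi (psi n) = q n := by
  have h1 : phi (sch v 8) = q (1, 0, 0, 0) := (phi_sch _ _).trans (cocycle_of .v 8)
  have h2 : phi (sch v 2) = q (0, 1, 0, 0) := (phi_sch _ _).trans (cocycle_of .v 2)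
  have h3 : phi (sch y 7) = q (0, 0, 1, 0) := (phi_sch _ _).trans (cocycle_of .y 7)
  have h4 : phi (sch z 2) = q (0, 0, 0, 1) := (phi_sch _ _).trans (cocycle_of .z 2)
  change phi (n.1 • sch v 8 + n.2.1 • sch v 2 + n.2.2.1 • sch y 7 + n.2.2.2 • sch z 2) = q n
  simp only [map_add, map_zsmul, h1, h2, h3, h4]
  simp [q]

theorem phi_injective : Function.Injective phi := by
  rw [injective_iff_map_eq_zero]
  intro a ha
  obtain ⟨⟨n, b, c, d⟩, rfl⟩ := psi_surjective a
  rw [phi_psi] at ha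
  simp only [q, Prod.mk_eq_zero] at ha
  obtain ⟨h0, h3, h4, h5, h7⟩ := ha
  have hb : ((b : ℤ) : ZMod 5) = 0 := congrFun h5 0
  have hc : ((c : ℤ) : ZMod 5) = 0 := congrFun h5 1
  have hd : ((d : ℤ) : ZMod 5) = 0 := congrFun h5 2
  rw [ZMod.intCast_zmod_eq_zero_iff_dvd] at *
  obtain ⟨b', rfl⟩ := hb
  obtain ⟨c', rfl⟩ := hc
  have h420 : (420 : ℤ) ∣ d := by omega
  obtain ⟨d', rfl⟩ := h420
  obtain ⟨o1, o2, o3, -⟩ := sch_gen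
  change n • sch v 8 + _ • sch v 2 + _ • sch y 7 + _ • sch z 2 = 0
  rw [h0, mul_comm _ b', mul_comm _ c', mul_comm _ d']
  simp only [Nat.cast_ofNat, mul_smul, o1, o2, o3, smul_zero, zero_smul, add_zero]

theorem phi_surjective : Function.Surjective phi := by
  rintro ⟨n, a, b, f, d⟩
  -- `280, 105, 336, 120` are the idempotents of `ℤ/420` for the factors `3, 4, 5, 7`.
  refine ⟨psi (n, (f 0).val, (f 1).val,
    280 * a.val + 105 * b.val + 336 * (f 2).val + 120 * d.val), ?_⟩
  rw [phi_psi]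
  refine Prod.ext rfl (Prod.ext ?_ (Prod.ext ?_ (Prod.ext ?_ ?_)))
  · have h1 : (280 : ZMod 3) = 1 := by decide
    have h2 : (105 : ZMod 3) = 0 := by decide
    have h3 : (336 : ZMod 3) = 0 := by decide
    have h4 : (120 : ZMod 3) = 0 := by decide
    simp [q, h1, h2, h3, h4]
  · have h1 : (280 : ZMod 4) = 0 := by decide
    have h2 : (105 : ZMod 4) = 1 := by decide
    have h3 : (336 : ZMod 4) = 0 := by decide
    have h4 : (120 : ZMod 4) = 0 := by decide
    simp [q, h1, h2, h3, h4]
  · have h1 : (280 : ZMod 5) = 0 := by decide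
    have h2 : (105 : ZMod 5) = 0 := by decide
    have h3 : (336 : ZMod 5) = 1 := by decide
    have h4 : (120 : ZMod 5) = 0 := by decide
    funext i
    fin_cases i <;> simp [q, h1, h2, h3, h4]
  · have h1 : (280 : ZMod 7) = 0 := by decide
    have h2 : (105 : ZMod 7) = 0 := by decide
    have h3 : (336 : ZMod 7) = 0 := by decide
    have h4 : (120 : ZMod 7) = 1 := by decide
    simp [q, h1, h2, h3, h4]

/-- `G` has a subgroup of index 9 whose abelianization is
`ℤ × (ℤ/3ℤ) × (ℤ/4ℤ) × (ℤ/5ℤ)³ × (ℤ/7ℤ)`. -/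
theorem ws_index_nine_cover :
    ∃ K : Subgroup G, K.index = 9 ∧
      Nonempty (Abelianization K ≃*
        Multiplicative (ℤ × ZMod 3 × ZMod 4 × (Fin 3 → ZMod 5) × ZMod 7)) :=
  ⟨K, index_K,
    ⟨AddEquiv.toMultiplicativeRight (AddEquiv.ofBijective phi ⟨phi_injective, phi_surjective⟩)⟩⟩
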